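/- If the input vectors x₁,…,x_m to Algorithm 1 span a proper subspace of (ZMod 2)^n (rank < n), then at termination at least one av_i equals 1, and the vector out produced by Algorithm 2 is nonzero and orthogonal to every x_j. -/

import Mathlib

/-!
The triangular vectors `β_i = basisVec s i` of the final state satisfy three things.

* `x0 j = ∑ i, x_j[i] • β_i`, where `x_j[i]` is the final content of the array. A column `i` of
  row `j` is not written again after iteration `(i, j)`, so this entry records whether `β_i` was
  subtracted from row `j`.
* Every `β_i` lies in the span of the inputs: it is zero until a pivot row is found, and then it is
  the unprocessed part of that row, which by the first point differs from `x0 j` by earlier `β`s.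
* `b_i = 0` whenever `av_i = 1`.

If no `av_i` equals `1`, the matrix of the `β_i` is unitriangular, hence the `β_i`, and with them
the inputs, span everything. The recursion for `out` says exactly that `out` is orthogonal to each
`β_i` with `av_i = 0`, and the other `β_i` vanish; so `out` is orthogonal to every input. Finally
`out = 0` would force `av = 0` in the recursion.

The invariant behind these facts (`AlgInv`) is stated with a separate progress counter `c j` for
each row. It is preserved by any iteration `(i, j)` with `c j = i`; only the order of the columns
within a row matters.
-/

/-- State of the triangular-basis algorithm (Algorithm 1). -/
structure AlgState (n m : ℕ) where
  x : Fin m → Fin n → ZMod 2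
  used : Fin m → ZMod 2
  av : Fin n → ZMod 2
  b : Fin n → Fin n → ZMod 2

/-- One iteration `(i, j)` of Algorithm 1:
`used_j += x_j[i] ∧ av_i`; `av_i += x_j[i] ∧ used_j`;
if `used_j` then `b_i[(i+1)..n] += x_j[(i+1)..n]`;
if `x_j[i]` then `x_j[(i+1)..n] += b_i[(i+1)..n]` (all mod 2). -/
def algStep {n m : ℕ} (i : Fin n) (j : Fin m) (s : AlgState n m) : AlgState n m :=
  let used' : ZMod 2 := s.used j + s.x j i * s.av i
  let av' : ZMod 2 := s.av i + s.x j i * used'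
  let b' : Fin n → ZMod 2 := fun k => s.b i k + (if i < k then used' * s.x j k else 0)
  let x' : Fin n → ZMod 2 := fun k => s.x j k + (if i < k then s.x j i * b' k else 0)
  { x := Function.update s.x j x'
    used := Function.update s.used j used'
    av := Function.update s.av i av'
    b := Function.update s.b i b' }

/-- Run a list of iterations in order. -/
def algRun {n m : ℕ} (L : List (Fin n × Fin m)) (s : AlgState n m) : AlgState n m :=
  L.foldl (fun s p => algStep p.1 p.2 s) s

/-- All iterations in the standard order: outer loop over `i`, inner loop over `j`. -/
def allIters (n m : ℕ) : List (Fin n × Fin m) :=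
  (List.finRange n).flatMap fun i => (List.finRange m).map fun j => (i, j)

/-- Initial state: input vectors `x0`, `used = 0`, `av = 1`, `b = 0`. -/
def initState {n m : ℕ} (x0 : Fin m → Fin n → ZMod 2) : AlgState n m :=
  { x := x0, used := fun _ => 0, av := fun _ => 1, b := fun _ _ => 0 }

/-- The triangular basis vectors `β_i = 0^{i-1} ∥ (1 - av_i) ∥ b_i[(i+1)..n]`. -/
def basisVec {n m : ℕ} (s : AlgState n m) : Fin n → Fin n → ZMod 2 :=
  fun i k => if k < i then 0 else if k = i then 1 - s.av i else s.b i k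

/-! ### The invariant of Algorithm 1 -/

/-- The invariant of Algorithm 1 when the columns `< c j` of row `j` have been processed. -/
structure AlgInv {n m : ℕ} (x0 : Fin m → Fin n → ZMod 2) (c : Fin m → ℕ) (s : AlgState n m) :
    Prop where
  /-- A row that has served as a pivot has no unprocessed content left. -/
  used_zero : ∀ j, s.used j = 1 → ∀ k : Fin n, c j ≤ k → s.x j k = 0
  b_zero : ∀ i, s.av i = 1 → ∀ k, s.b i k = 0
  /-- As long as column `i` has no pivot, all rows processed there had entry `0`. -/
  x_zero : ∀ i, s.av i = 1 → ∀ j, (i : ℕ) < c j → s.x j i = 0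
  /-- Each input is its unprocessed part plus the combination of the `β_i` recorded by its
  processed part. -/
  decomp : ∀ j k, x0 j k = (if c j ≤ (k : ℕ) then s.x j k else 0) +
    ∑ i : Fin n, if (i : ℕ) < c j then s.x j i * basisVec s i k else 0
  mem_span : ∀ i, basisVec s i ∈ Submodule.span (ZMod 2) (Set.range x0)

lemma zmod_two_cases (a : ZMod 2) : a = 0 ∨ a = 1 := by
  revert a; decide

lemma algInv_init {n m : ℕ} (x0 : Fin m → Fin n → ZMod 2) :
    AlgInv x0 (fun _ => 0) (initState x0) where
  used_zero := by simp [initState]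
  b_zero := by simp [initState]
  x_zero := by simp
  decomp := by simp [initState]
  mem_span i := by
    have : basisVec (initState x0) i = 0 := by
      funext k
      simp [basisVec, initState]
    rw [this]
    exact Submodule.zero_mem _

lemma sum_lt_succ {n : ℕ} (i : Fin n) (f : Fin n → ZMod 2) :
    (∑ p : Fin n, if (p : ℕ) < (i : ℕ) + 1 then f p else 0) =
      f i + ∑ p : Fin n, if (p : ℕ) < (i : ℕ) then f p else 0 := by
  have h : ∀ p : Fin n, (if (p : ℕ) < (i : ℕ) + 1 then f p else 0) =
      (if p = i then f p else 0) + if (p : ℕ) < (i : ℕ) then f p else 0 := by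
    intro p
    rcases lt_trichotomy p i with h | h | h
    · have h1 : (p : ℕ) < i := h
      simp [h.ne, h1, Nat.lt_succ_of_lt h1]
    · subst h; simp
    · have h1 : (i : ℕ) < p := h
      simp [h.ne', show ¬ (p : ℕ) < i + 1 by omega, show ¬ (p : ℕ) < i by omega]
  simp only [h, Finset.sum_add_distrib]
  simp

/-- The part of row `j` not yet processed stays in the span of the inputs. -/
lemma AlgInv.tail_mem {n m : ℕ} {x0 : Fin m → Fin n → ZMod 2} {c : Fin m → ℕ}
    {s : AlgState n m} (h : AlgInv x0 c s) (j : Fin m) :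
    (fun k : Fin n => if c j ≤ (k : ℕ) then s.x j k else 0) ∈
      Submodule.span (ZMod 2) (Set.range x0) := by
  have e : (fun k : Fin n => if c j ≤ (k : ℕ) then s.x j k else 0) =
      x0 j - ∑ i : Fin n, (if (i : ℕ) < c j then s.x j i else 0) • basisVec s i := by
    funext k
    simp only [Pi.sub_apply, Finset.sum_apply, Pi.smul_apply, smul_eq_mul, ite_mul, zero_mul]
    rw [h.decomp j k]
    ring
  rw [e]
  exact Submodule.sub_mem _ (Submodule.subset_span ⟨j, rfl⟩)
    (Submodule.sum_mem _ fun i _ => Submodule.smul_mem _ _ (h.mem_span i))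

/-- The decomposition of the inputs survives a step that alters a `β_p` only where all recorded
coefficients are zero (`hβ`) and subtracts `x_j[i] • β_i` from the part of row `j` beyond column
`i` (`hx`); by `hd` this also accounts for the entry in column `i` itself. -/
lemma decomp_step {n m : ℕ} {x0 : Fin m → Fin n → ZMod 2} {c : Fin m → ℕ}
    {s s' : AlgState n m} (h : AlgInv x0 c s) (i : Fin n) (j : Fin m) (hc : c j = i)
    (hβ : ∀ (j' : Fin m) (p k : Fin n), (p : ℕ) < c j' → s.x j' p * basisVec s' p k = s.x j' p * basisVec s p k)
    (hx : s'.x = Function.update s.x j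
      fun k => s.x j k + if i < k then s.x j i * basisVec s' i k else 0)
    (hd : s.x j i * basisVec s' i i = s.x j i) (j' : Fin m) (k : Fin n) :
    x0 j' k = (if Function.update c j (i + 1) j' ≤ (k : ℕ) then s'.x j' k else 0) +
      ∑ p : Fin n, if (p : ℕ) < Function.update c j (i + 1) j' then
        s'.x j' p * basisVec s' p k else 0 := by
  rw [h.decomp j' k]
  have hs : (∑ p : Fin n, if (p : ℕ) < c j' then s.x j' p * basisVec s p k else 0) =
      ∑ p : Fin n, if (p : ℕ) < c j' then s.x j' p * basisVec s' p k else 0 := by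
    refine Finset.sum_congr rfl fun p _ => ?_
    split_ifs with hp
    · exact (hβ j' p k hp).symm
    · rfl
  rw [hs, hx]
  by_cases hj : j' = j
  · subst hj
    simp only [Function.update_self, hc]
    have e : ∀ p : Fin n, (if (p : ℕ) < (i : ℕ) + 1 then
        (s.x j' p + if i < p then s.x j' i * basisVec s' i p else 0) * basisVec s' p k else 0) =
        if (p : ℕ) < (i : ℕ) + 1 then s.x j' p * basisVec s' p k else 0 := by
      intro p
      split_ifs with h1 h2
      · exact absurd h2 (by rw [Fin.lt_def]; omega)
      · rw [add_zero]
      · rfl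
    rw [Finset.sum_congr rfl fun p _ => e p, sum_lt_succ]
    rw [← add_assoc]
    congr 1
    rcases lt_trichotomy k i with hk | hk | hk
    · have h1 : (k : ℕ) < i := hk
      simp [basisVec, hk, show ¬ (i : ℕ) ≤ k by omega, show ¬ (i : ℕ) + 1 ≤ k by omega]
    · subst hk
      simp [hd]
    · have h1 : (i : ℕ) < k := hk
      simp only [h1.le, if_true, hk, show (i : ℕ) + 1 ≤ k from h1]
      rw [add_assoc, CharTwo.add_self_eq_zero, add_zero]
  · simp [Function.update_of_ne hj]

/-! ### Preservation of the invariant -/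

lemma algInv_step {n m : ℕ} {x0 : Fin m → Fin n → ZMod 2} {c : Fin m → ℕ}
    {s : AlgState n m} (h : AlgInv x0 c s) (i : Fin n) (j : Fin m) (hc : c j = i) :
    AlgInv x0 (Function.update c j (i + 1)) (algStep i j s) := by
  have hx : (algStep i j s).x = Function.update s.x j
      fun k => s.x j k + if i < k then s.x j i * basisVec (algStep i j s) i k else 0 := by
    simp only [algStep]
    congr 1
    funext k
    by_cases hk : i < k
    · simp [basisVec, hk, hk.ne', hk.not_gt]
    · simp [hk]
  rcases zmod_two_cases (s.x j i) with h0 | h1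
  · -- Entry `0`: nothing changes.
    have hs : algStep i j s = s := by
      have hb : ∀ k, (if i < k then s.used j * s.x j k else 0) = 0 := by
        intro k
        split_ifs with hk
        · rcases zmod_two_cases (s.used j) with hu | hu
          · simp [hu]
          · rw [h.used_zero j hu k (by rw [hc]; exact hk.le), mul_zero]
        · rfl
      simp [algStep, h0, hb]
    rw [hs] at hx ⊢
    refine ⟨?_, h.b_zero, ?_, ?_, h.mem_span⟩
    · intro j' hu k hk
      refine h.used_zero j' hu k ?_
      by_cases hj : j' = j
      · subst hj; simp at hk; omega
      · simpa [hj] using hk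
    · intro p hp j' hj'
      by_cases hj : j' = j
      · subst hj
        simp only [Function.update_self] at hj'
        rcases Nat.lt_succ_iff_lt_or_eq.1 hj' with h2 | h2
        · exact h.x_zero p hp j' (by omega)
        · rw [Fin.ext h2, h0]
      · exact h.x_zero p hp j' (by simpa [hj] using hj')
    · exact decomp_step h i j hc (fun _ _ _ _ => rfl) hx (by simp [h0])
  ·
    -- Entry `1`: row `j` is unused. With `av_i = 1` it becomes the pivot and `β_i` its unprocessed
    -- part; with `av_i = 0` the existing `β_i` is subtracted from it.
    have hu : s.used j = 0 := by
      rcases zmod_two_cases (s.used j) with hu | hu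
      · exact hu
      · have := h.used_zero j hu i hc.le
        rw [h1] at this
        exact absurd this one_ne_zero
    have hav : (algStep i j s).av = Function.update s.av i 0 := by
      simp only [algStep, h1, hu]
      rw [zero_add, one_mul, one_mul, CharTwo.add_self_eq_zero]
    have hused : (algStep i j s).used = Function.update s.used j (s.av i) := by
      simp [algStep, h1, hu]
    have hb : (algStep i j s).b = Function.update s.b i
        fun k => s.b i k + if i < k then s.av i * s.x j k else 0 := by
      simp [algStep, h1, hu]
    have hne : ∀ p, p ≠ i → basisVec (algStep i j s) p = basisVec s p := by
      intro p hp
      funext k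
      simp [basisVec, hav, hb, hp]
    have hi : s.av i = 1 → basisVec (algStep i j s) i =
        fun k : Fin n => if c j ≤ (k : ℕ) then s.x j k else 0 := by
      intro ha
      funext k
      have hk0 := h.b_zero i ha k
      rcases lt_trichotomy k i with hk | hk | hk
      · have h2 : (k : ℕ) < i := hk
        simp [basisVec, hk, hc, show ¬ (i : ℕ) ≤ k by omega]
      · subst hk
        simp [basisVec, hav, hc, h1]
      · have h2 : (i : ℕ) < k := hk
        simp [basisVec, hb, hc, hk.not_gt, hk.ne', hk, h2.le, hk0, ha]
    have hi' : s.av i = 0 → basisVec (algStep i j s) i = basisVec s i := by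
      intro ha
      funext k
      simp [basisVec, hav, hb, ha]
    refine ⟨?_, ?_, ?_, ?_, ?_⟩
    · intro j' hj' k hk
      by_cases hj : j' = j
      · subst hj
        rw [hused, Function.update_self] at hj'
        rw [Function.update_self] at hk
        have hik : i < k := hk
        rw [hx, Function.update_self, hi hj']
        simp only [hik, if_true, hc, h1, one_mul, show (i : ℕ) ≤ k by omega]
        exact CharTwo.add_self_eq_zero _
      · rw [hused, Function.update_of_ne hj] at hj'
        rw [Function.update_of_ne hj] at hk
        rw [hx, Function.update_of_ne hj]
        exact h.used_zero j' hj' k hk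
    · intro p hp k
      by_cases hpi : p = i
      · subst hpi; simp [hav] at hp
      · rw [hav, Function.update_of_ne hpi] at hp
        rw [hb, Function.update_of_ne hpi]
        exact h.b_zero p hp k
    · intro p hp j' hj'
      by_cases hpi : p = i
      · subst hpi; simp [hav] at hp
      · rw [hav, Function.update_of_ne hpi] at hp
        rw [hx]
        by_cases hj : j' = j
        · subst hj
          rw [Function.update_self] at hj' ⊢
          have h2 : (p : ℕ) ≠ i := fun e => hpi (Fin.ext e)
          have h3 : ¬ i < p := by rw [Fin.lt_def]; omega
          simp only [h3, if_false, add_zero]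
          exact h.x_zero p hp j' (by omega)
        · rw [Function.update_of_ne hj] at hj' ⊢
          exact h.x_zero p hp j' hj'
    · refine decomp_step h i j hc ?_ hx ?_
      · intro j' p k hp
        by_cases hpi : p = i
        · subst hpi
          rcases zmod_two_cases (s.av p) with ha | ha
          · rw [hi' ha]
          · rw [h.x_zero p ha j' hp, zero_mul, zero_mul]
        · rw [hne p hpi]
      · simp [basisVec, hav]
    · intro p
      by_cases hpi : p = i
      · subst hpi
        rcases zmod_two_cases (s.av p) with ha | ha
        · rw [hi' ha]; exact h.mem_span p
        · rw [hi ha]; exact h.tail_mem j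
      · rw [hne p hpi]; exact h.mem_span p

/-- Completing column `i`, when `l` lists the rows in which it is still to be processed. -/
lemma algInv_column {n m : ℕ} {x0 : Fin m → Fin n → ZMod 2} (i : Fin n) :
    ∀ (l : List (Fin m)), l.Nodup → ∀ s : AlgState n m,
      AlgInv x0 (fun j => if j ∈ l then (i : ℕ) else i + 1) s →
      AlgInv x0 (fun _ => (i : ℕ) + 1) (algRun (l.map fun j => (i, j)) s)
  | [], _, s, h => by simpa [algRun] using h
  | j :: l, hl, s, h => by
    have h' := algInv_step h i j (by simp)
    have e : Function.update (fun j' => if j' ∈ j :: l then (i : ℕ) else i + 1) j (i + 1) =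
        fun j' => if j' ∈ l then (i : ℕ) else i + 1 := by
      funext j'
      by_cases hj : j' = j
      · subst hj; simp [(List.nodup_cons.1 hl).1]
      · simp [hj]
    rw [e] at h'
    exact algInv_column i l (List.nodup_cons.1 hl).2 _ h'

/-- Completing the consecutive columns `l`, starting with column `t`. -/
lemma algInv_columns {n m : ℕ} {x0 : Fin m → Fin n → ZMod 2} :
    ∀ (l : List (Fin n)) (t : ℕ), l.map Fin.val = List.range' t l.length →
      ∀ s : AlgState n m, AlgInv x0 (fun _ => t) s →
      AlgInv x0 (fun _ => t + l.length)
        (algRun (l.flatMap fun i => (List.finRange m).map fun j => (i, j)) s)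
  | [], _, _, s, h => by simpa [algRun] using h
  | i :: l, t, hl, s, h => by
    simp only [List.map_cons, List.length_cons, List.range'_succ, List.cons.injEq] at hl
    obtain ⟨rfl, hl⟩ := hl
    have h1 := algInv_column i (List.finRange m) (List.nodup_finRange m) s (by simpa using h)
    have h2 := algInv_columns l (i + 1) hl _ h1
    have e : (i : ℕ) + (i :: l).length = i + 1 + l.length := by simp; omega
    rw [e]
    simpa [algRun, List.foldl_append] using h2

lemma algInv_final {n m : ℕ} (x0 : Fin m → Fin n → ZMod 2) :
    AlgInv x0 (fun _ => n) (algRun (allIters n m) (initState x0)) := by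
  have h := algInv_columns (List.finRange n) 0
    (by simp [List.range_eq_range']) _ (algInv_init x0)
  simpa [allIters] using h

/-! ### Spanning and orthogonality of the triangular vectors -/

/-- Without a free column the triangular vectors are unitriangular, hence span everything. -/
lemma span_basisVec_eq_top {n m : ℕ} (s : AlgState n m) (h : ∀ i, s.av i = 0) :
    Submodule.span (ZMod 2) (Set.range (basisVec s)) = ⊤ := by
  have ht : (Matrix.of (basisVec s)).IsUpperTriangular := by
    intro i k hk
    have hk' : k < i := hk
    simp [basisVec, hk']
  have hd : (Matrix.of (basisVec s)).det = 1 := by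
    rw [Matrix.det_of_isUpperTriangular ht]
    simp [basisVec, h]
  have hli : LinearIndependent (ZMod 2) (Matrix.of (basisVec s)).row :=
    Matrix.linearIndependent_rows_iff_isUnit.2
      ((Matrix.isUnit_iff_isUnit_det _).2 (by rw [hd]; exact isUnit_one))
  exact hli.span_eq_top_of_card_eq_finrank' (by simp)

/-- The recursion of Algorithm 2 makes `out` orthogonal to each triangular vector. -/
lemma basisVec_orthogonal {n m : ℕ} (s : AlgState n m) (hb : ∀ i, s.av i = 1 → ∀ k, s.b i k = 0)
    (out : Fin n → ZMod 2)
    (hout : ∀ i : Fin n, out i = s.av i +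
      ∑ j ∈ Finset.univ.filter (fun j : Fin n => i < j), s.b i j * out j) (i : Fin n) :
    ∑ k, basisVec s i k * out k = 0 := by
  rcases zmod_two_cases (s.av i) with ha | ha
  · have e : ∀ k, basisVec s i k * out k =
        (if k = i then out k else 0) + if i < k then s.b i k * out k else 0 := by
      intro k
      rcases lt_trichotomy k i with hk | hk | hk
      · simp [basisVec, hk, hk.ne, hk.not_gt]
      · subst hk; simp [basisVec, ha]
      · simp [basisVec, hk, hk.ne', hk.not_gt]
    have ho := hout i
    rw [ha, zero_add, Finset.sum_filter] at ho
    rw [Finset.sum_congr rfl fun k _ => e k, Finset.sum_add_distrib, ← ho]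
    simp [CharTwo.add_self_eq_zero]
  · refine Finset.sum_eq_zero fun k _ => ?_
    simp [basisVec, ha, hb i ha k]

/-- If the inputs to Algorithm 1 span a proper subspace of `(ZMod 2)^n`, then at
termination some `av_i = 1`, and the vector `out` produced by Algorithm 2 is
nonzero and orthogonal to every input vector `x_j`. -/
theorem alg2_nonzero_orthogonal {n m : ℕ} (x0 : Fin m → Fin n → ZMod 2)
    (hrank : Submodule.span (ZMod 2) (Set.range x0) ≠ ⊤)
    (out : Fin n → ZMod 2)
    (hout : ∀ i : Fin n,
      out i = (algRun (allIters n m) (initState x0)).av i +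
        ∑ j ∈ Finset.univ.filter (fun j : Fin n => i < j),
          (algRun (allIters n m) (initState x0)).b i j * out j) :
    (∃ i : Fin n, (algRun (allIters n m) (initState x0)).av i = 1) ∧
    out ≠ 0 ∧ ∀ j : Fin m, ∑ k, x0 j k * out k = 0 := by
  have h := algInv_final x0
  set s := algRun (allIters n m) (initState x0)
  have hex : ∃ i : Fin n, s.av i = 1 := by
    by_contra hno
    have hz : ∀ i, s.av i = 0 := fun i =>
      (zmod_two_cases (s.av i)).resolve_right fun hi => hno ⟨i, hi⟩
    refine hrank (top_le_iff.1 ?_)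
    rw [← span_basisVec_eq_top s hz, Submodule.span_le]
    rintro _ ⟨i, rfl⟩
    exact h.mem_span i
  refine ⟨hex, ?_, fun j => ?_⟩
  · rintro rfl
    obtain ⟨i, hi⟩ := hex
    simpa [hi] using hout i
  · have e : ∀ k, x0 j k * out k = ∑ i, s.x j i * (basisVec s i k * out k) := by
      intro k
      rw [h.decomp j k]
      simp [Nat.not_le.2 k.isLt, Finset.sum_mul, mul_assoc]
    rw [Finset.sum_congr rfl fun k _ => e k, Finset.sum_comm]
    refine Finset.sum_eq_zero fun i _ => ?_
    rw [← Finset.mul_sum, basisVec_orthogonal s h.b_zero out hout i, mul_zero]
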